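/- Let B be a category with all pullbacks and p : E ⥤ B a bifibration of categories. Let (p ↓ B) be the comma category with objects (e : E, b : B, u : p e ⟶ b), let ∂₁ : (p ↓ B) ⥤ B be the projection (e,b,u) ↦ b (a bifibration), and let ι : E ⥤ (p ↓ B) over B be the functor e ↦ (e, p e, 𝟙). Then p satisfies the Beck–Chevalley condition if and only if ι admits a left adjoint τ over B (with ∂₁ ∘ τ = p and the unit and counit of the adjunction vertical) — given on objects by τ(e, b, u) = u_! e — and this τ is a cartesian functor over B, i.e. τ sends ∂₁-cartesian morphisms of (p ↓ B) to p-cartesian morphisms of E. -/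

import Mathlib

open CategoryTheory CategoryTheory.Limits

namespace MoensPaper

variable {E : Type*} [Category E] {B : Type*} [Category B]

/-- A morphism `φ` of `E` is (strongly) cocartesian over `p`. -/
def IsCocart (p : E ⥤ B) {x y : E} (φ : x ⟶ y) : Prop :=
  ∀ {z : E} (ψ : x ⟶ z) (v : p.obj y ⟶ p.obj z),
    p.map ψ = p.map φ ≫ v → ∃! τ : y ⟶ z, p.map τ = v ∧ φ ≫ τ = ψ

/-- A morphism `φ` of `E` is (strongly) cartesian over `p`. -/
def IsCart (p : E ⥤ B) {x y : E} (φ : x ⟶ y) : Prop :=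
  ∀ {z : E} (ψ : z ⟶ y) (v : p.obj z ⟶ p.obj x),
    p.map ψ = v ≫ p.map φ → ∃! τ : z ⟶ x, p.map τ = v ∧ τ ≫ φ = ψ

/-- `p` is a cocartesian fibration (Grothendieck opfibration): every morphism of `B`
with domain `p.obj x` admits a cocartesian lift with source `x`. -/
def IsCocartFib (p : E ⥤ B) : Prop :=
  ∀ (x : E) (b : B) (u : p.obj x ⟶ b),
    ∃ (y : E) (φ : x ⟶ y) (h : p.obj y = b),
      IsCocart p φ ∧ p.map φ = u ≫ eqToHom h.symm

/-- `p` is a cartesian fibration (Grothendieck fibration): every morphism of `B`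
with codomain `p.obj y` admits a cartesian lift with target `y`. -/
def IsCartFib (p : E ⥤ B) : Prop :=
  ∀ (y : E) (b : B) (u : b ⟶ p.obj y),
    ∃ (x : E) (φ : x ⟶ y) (h : p.obj x = b),
      IsCart p φ ∧ p.map φ = eqToHom h ≫ u

/-- The Beck–Chevalley condition: for every commutative square in `E` lying over a
pullback square in `B` whose bottom edge is cocartesian and whose two vertical edges
are cartesian, the top edge is cocartesian. -/
def BCC (p : E ⥤ B) : Prop :=
  ∀ {d' e' d e : E} (f' : d' ⟶ e') (g' : d' ⟶ d) (g : e' ⟶ e) (f : d ⟶ e),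
    f' ≫ g = g' ≫ f →
    IsPullback (p.map f') (p.map g') (p.map g) (p.map f) →
    IsCocart p f → IsCart p g → IsCart p g' →
    IsCocart p f'

/-- The canonical functor `ι : E ⥤ (p ↓ B)`, `e ↦ (e, p e, 𝟙)`. -/
def iota (p : E ⥤ B) : E ⥤ Comma p (𝟭 B) where
  obj e := { left := e, right := p.obj e, hom := 𝟙 (p.obj e) }
  map f := { left := f, right := p.map f, w := by simp }

theorem IsCart.hom_ext {p : E ⥤ B} {x y : E} {φ : x ⟶ y} (h : IsCart p φ) {z : E}
    {s t : z ⟶ x} (h1 : p.map s = p.map t) (h2 : s ≫ φ = t ≫ φ) : s = t :=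
  (h (t ≫ φ) (p.map t) (by simp)).unique ⟨h1, h2⟩ ⟨rfl, rfl⟩

theorem IsCocart.hom_ext {p : E ⥤ B} {x y : E} {φ : x ⟶ y} (h : IsCocart p φ) {z : E}
    {s t : y ⟶ z} (h1 : p.map s = p.map t) (h2 : φ ≫ s = φ ≫ t) : s = t :=
  (h (φ ≫ t) (p.map t) (by simp)).unique ⟨h1, h2⟩ ⟨rfl, rfl⟩

theorem IsCart.isIso {p : E ⥤ B} {x y : E} {φ : x ⟶ y} (h : IsCart p φ)
    [IsIso (p.map φ)] : IsIso φ := by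
  obtain ⟨t, ⟨h1, h2⟩, -⟩ := h (𝟙 y) (inv (p.map φ)) (by simp)
  exact ⟨t, h.hom_ext (by simp [h1]) (by simp [h2]), h2⟩

theorem IsCocart.isIso {p : E ⥤ B} {x y : E} {φ : x ⟶ y} (h : IsCocart p φ)
    [IsIso (p.map φ)] : IsIso φ := by
  obtain ⟨t, ⟨h1, h2⟩, -⟩ := h (𝟙 x) (inv (p.map φ)) (by simp)
  exact ⟨t, h2, h.hom_ext (by simp [h1]) (by simp [reassoc_of% h2])⟩

theorem IsCart.of_iso (p : E ⥤ B) {x y : E} (φ : x ⟶ y) [IsIso φ] : IsCart p φ := by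
  intro z ψ v h
  refine ⟨ψ ≫ inv φ, ⟨by simp [h], by simp⟩, ?_⟩
  rintro t ⟨-, rfl⟩
  simp

theorem IsCocart.of_iso (p : E ⥤ B) {x y : E} (φ : x ⟶ y) [IsIso φ] : IsCocart p φ := by
  intro z ψ v h
  refine ⟨inv φ ≫ ψ, ⟨by simp [h], by simp⟩, ?_⟩
  rintro t ⟨-, rfl⟩
  simp

theorem IsCart.comp {p : E ⥤ B} {x y w : E} {φ : x ⟶ y} {χ : y ⟶ w}
    (h : IsCart p φ) (h' : IsCart p χ) : IsCart p (φ ≫ χ) := by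
  intro z ψ v hv
  obtain ⟨s, ⟨s1, s2⟩, -⟩ := h' ψ (v ≫ p.map φ) (by simp [hv])
  obtain ⟨t, ⟨t1, t2⟩, -⟩ := h s v s1
  refine ⟨t, ⟨t1, by rw [← Category.assoc, t2, s2]⟩, ?_⟩
  rintro t' ⟨t1', t2'⟩
  refine h.hom_ext (by rw [t1, t1']) (h'.hom_ext (by simp [t1, t1']) ?_)
  rw [t2, s2, ← t2', Category.assoc]

theorem IsCocart.comp {p : E ⥤ B} {x y w : E} {φ : x ⟶ y} {χ : y ⟶ w}
    (h : IsCocart p φ) (h' : IsCocart p χ) : IsCocart p (φ ≫ χ) := by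
  intro z ψ v hv
  obtain ⟨s, ⟨s1, s2⟩, -⟩ := h ψ (p.map χ ≫ v) (by simp [hv])
  obtain ⟨t, ⟨t1, t2⟩, -⟩ := h' s v s1
  refine ⟨t, ⟨t1, by rw [Category.assoc, t2, s2]⟩, ?_⟩
  rintro t' ⟨t1', t2'⟩
  refine h'.hom_ext (by rw [t1, t1']) (h.hom_ext (by simp [t1, t1']) ?_)
  rw [t2, s2, ← t2', Category.assoc]

theorem IsCart.cancel {p : E ⥤ B} {x y w : E} {φ : x ⟶ y} {χ : y ⟶ w}
    (h : IsCart p (φ ≫ χ)) (h' : IsCart p χ) : IsCart p φ := by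
  intro z ψ v hv
  obtain ⟨t, ⟨t1, t2⟩, -⟩ := h (ψ ≫ χ) v (by simp [hv])
  refine ⟨t, ⟨t1, h'.hom_ext (by simp [t1, hv]) (by simpa using t2)⟩, ?_⟩
  rintro t' ⟨t1', t2'⟩
  exact h.hom_ext (by rw [t1, t1']) (by rw [t2, ← t2', Category.assoc])

/-- Pullback square plus cartesian left leg gives a cartesian morphism of the comma category. -/
theorem isCart_snd {p : E ⥤ B} {X Y : Comma p (𝟭 B)} (m : X ⟶ Y)
    (hp : IsPullback X.hom (p.map m.left) m.right Y.hom) (hc : IsCart p m.left) :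
    IsCart (Comma.snd p (𝟭 B)) m := by
  intro Z ψ v hv
  have hv' : ψ.right = v ≫ m.right := hv
  have hw : p.map ψ.left ≫ Y.hom = Z.hom ≫ ψ.right := ψ.w
  obtain ⟨t, ⟨t1, t2⟩, -⟩ := hc ψ.left
    (hp.lift (Z.hom ≫ v) (p.map ψ.left) (by
      rw [hw, hv']; exact Category.assoc _ _ _)) (by simp)
  have tw : p.map t ≫ X.hom = Z.hom ≫ v := by rw [t1]; exact hp.lift_fst _ _ _
  refine ⟨{ left := t, right := v, w := tw }, ⟨rfl, ?_⟩, ?_⟩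
  · ext
    · exact t2
    · exact hv'.symm
  · rintro s ⟨s1, s2⟩
    have s1' : s.right = v := s1
    have hs : s.left ≫ m.left = ψ.left := congrArg CommaMorphism.left s2
    have sw : p.map s.left ≫ X.hom = Z.hom ≫ s.right := s.w
    ext
    · refine hc.hom_ext (hp.hom_ext ?_ ?_) ?_
      · exact (sw.trans (by rw [s1'])).trans tw.symm
      · rw [← p.map_comp, ← p.map_comp, hs, t2]
      · exact hs.trans t2.symm
    · exact s1'

theorem exists_lift (p : E ⥤ B) [HasPullbacks B] (hcart : IsCartFib p)
    (Y : Comma p (𝟭 B)) (b : B) (u : b ⟶ Y.right) :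
    ∃ (x : E) (h : p.obj x ⟶ b) (l : x ⟶ Y.left),
      IsPullback h (p.map l) u Y.hom ∧ IsCart p l := by
  have hu : IsPullback (pullback.fst u Y.hom) (pullback.snd u Y.hom) u Y.hom :=
    IsPullback.of_hasPullback _ _
  obtain ⟨x, φ, h, hφ, e⟩ := hcart Y.left _ (pullback.snd u Y.hom)
  refine ⟨x, eqToHom h ≫ pullback.fst u Y.hom, φ, ?_, hφ⟩
  rw [e]
  exact hu.of_iso (eqToIso h.symm) (Iso.refl _) (Iso.refl _) (Iso.refl _)
    (by simp) (by simp) (by simp) (by simp)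

theorem pb_iso {P P' a b c : B} {h : P ⟶ a} {q : P ⟶ b} {u : a ⟶ c} {v : b ⟶ c}
    (hp : IsPullback h q u v) (i : P' ⟶ P) (_ : IsIso i) :
    IsPullback (i ≫ h) (i ≫ q) u v :=
  hp.of_iso (asIso i).symm (Iso.refl _) (Iso.refl _) (Iso.refl _)
    (by simp) (by simp) (by simp) (by simp)

theorem of_isCart_snd {p : E ⥤ B} [HasPullbacks B] (hcart : IsCartFib p)
    {X Y : Comma p (𝟭 B)} (m : X ⟶ Y) (hm : IsCart (Comma.snd p (𝟭 B)) m) :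
    IsPullback X.hom (p.map m.left) m.right Y.hom ∧ IsCart p m.left := by
  obtain ⟨x, h, l, hp, hl⟩ := exists_lift p hcart Y X.right m.right
  let X' : Comma p (𝟭 B) := { left := x, right := X.right, hom := h }
  let n : X' ⟶ Y := { left := l, right := m.right, w := hp.w.symm }
  have hn : IsCart (Comma.snd p (𝟭 B)) n := isCart_snd n hp hl
  obtain ⟨k, ⟨k1, k2⟩, -⟩ := hn m (𝟙 X.right) (Category.id_comp _).symm
  have hk : IsCart (Comma.snd p (𝟭 B)) k := IsCart.cancel (k2 ▸ hm) hn
  have : IsIso ((Comma.snd p (𝟭 B)).map k) := by rw [k1]; exact IsIso.id _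
  have : IsIso k := hk.isIso
  have i1 : IsIso k.left := inferInstanceAs (IsIso ((Comma.fst p (𝟭 B)).map k))
  have e : k.left ≫ l = m.left := congrArg CommaMorphism.left k2
  have k1' : k.right = 𝟙 X.right := k1
  have kw : p.map k.left ≫ h = X.hom ≫ k.right := k.w
  rw [k1'] at kw
  have hml : IsCart p m.left := by
    rw [← e]
    exact IsCart.comp (IsCart.of_iso p k.left) hl
  refine ⟨?_, hml⟩
  have kw2 : p.map k.left ≫ h = X.hom := kw.trans (Category.comp_id _)
  have i2 : IsIso (p.map k.left) := inferInstance
  have key := pb_iso hp (p.map k.left) i2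
  have e2 : p.map k.left ≫ p.map l = p.map m.left := (p.map_comp _ _).symm.trans (congrArg _ e)
  exact e2 ▸ kw2 ▸ key

theorem isCartFib_snd (p : E ⥤ B) [HasPullbacks B] (hcart : IsCartFib p) :
    IsCartFib (Comma.snd p (𝟭 B)) := by
  intro Y b u
  obtain ⟨x, h, l, hp, hl⟩ := exists_lift p hcart Y b u
  let X' : Comma p (𝟭 B) := { left := x, right := b, hom := h }
  let n : X' ⟶ Y := { left := l, right := u, w := hp.w.symm }
  exact ⟨X', n, rfl, isCart_snd n hp hl, (Category.id_comp _).symm⟩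

theorem isCocartFib_snd (p : E ⥤ B) : IsCocartFib (Comma.snd p (𝟭 B)) := by
  intro X b u
  let u' : X.right ⟶ b := u
  let h : p.obj X.left ⟶ b := X.hom ≫ u'
  let X' : Comma p (𝟭 B) := { left := X.left, right := b, hom := h }
  let n : X ⟶ X' := { left := 𝟙 _, right := u', w := by simp [X', h] }
  refine ⟨X', n, rfl, ?_, (Category.comp_id _).symm⟩
  intro Z ψ v hv
  have hv' : ψ.right = u' ≫ v := hv
  have hw : p.map ψ.left ≫ Z.hom = X.hom ≫ ψ.right := ψ.w
  refine ⟨{ left := ψ.left, right := v, w := ?_ }, ⟨rfl, ?_⟩, ?_⟩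
  · refine hw.trans ?_
    rw [hv']
    exact (Category.assoc _ _ _).symm
  · ext
    · exact Category.id_comp _
    · exact hv'.symm
  · rintro s ⟨s1, s2⟩
    ext
    · exact (Category.id_comp _).symm.trans (congrArg CommaMorphism.left s2)
    · exact s1

theorem bcc_of_adj (p : E ⥤ B) (τ : Comma p (𝟭 B) ⥤ E) (adj : τ ⊣ iota p)
    (hr : ∀ X : Comma p (𝟭 B), IsIso ((adj.unit.app X).right))
    (hl : ∀ X : Comma p (𝟭 B), IsCocart p ((adj.unit.app X).left))
    (hc : ∀ {X Y : Comma p (𝟭 B)} (φ : X ⟶ Y),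
          IsCart (Comma.snd p (𝟭 B)) φ → IsCart p (τ.map φ)) : BCC p := by
  intro d' e' d e f' g' g f comm pb hf hg hg'
  let X : Comma p (𝟭 B) := { left := d', right := p.obj e', hom := p.map f' }
  let Y : Comma p (𝟭 B) := { left := d, right := p.obj e, hom := p.map f }
  let m : X ⟶ Y := { left := g', right := p.map g, w := pb.w.symm }
  have hm : IsCart p (τ.map m) := hc m (isCart_snd m pb hg')
  let lX : d' ⟶ τ.obj X := (adj.unit.app X).left
  let lY : d ⟶ τ.obj Y := (adj.unit.app Y).left
  let rX : p.obj e' ⟶ p.obj (τ.obj X) := (adj.unit.app X).right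
  let rY : p.obj e ⟶ p.obj (τ.obj Y) := (adj.unit.app Y).right
  have : IsIso rX := hr X
  have : IsIso rY := hr Y
  have hlX : IsCocart p lX := hl X
  have hlY : IsCocart p lY := hl Y
  have wX : p.map lX = p.map f' ≫ rX :=
    (Category.comp_id _).symm.trans (adj.unit.app X).w
  have wY : p.map lY = p.map f ≫ rY :=
    (Category.comp_id _).symm.trans (adj.unit.app Y).w
  have nl : g' ≫ lY = lX ≫ τ.map m :=
    congrArg CommaMorphism.left (adj.unit.naturality m)
  have nr : p.map g ≫ rY = rX ≫ p.map (τ.map m) :=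
    congrArg CommaMorphism.right (adj.unit.naturality m)
  obtain ⟨kX, ⟨kX1, kX2⟩, -⟩ := hlX f' (inv rX) (by simp [wX])
  obtain ⟨kY, ⟨kY1, kY2⟩, -⟩ := hlY f (inv rY) (by simp [wY])
  have hkY : IsIso kY := by
    obtain ⟨t, ⟨t1, t2⟩, -⟩ := hf lY rY wY
    exact ⟨t, hlY.hom_ext (by simp [kY1, t1]) (by simp [reassoc_of% kY2, t2]),
      hf.hom_ext (by simp [kY1, t1]) (by simp [reassoc_of% t2, kY2])⟩
  have key : kX ≫ g = τ.map m ≫ kY := by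
    apply hlX.hom_ext
    · rw [p.map_comp, p.map_comp, kX1, kY1, IsIso.inv_comp_eq, ← Category.assoc, ← nr]
      simp
    · rw [← Category.assoc, kX2, ← Category.assoc, ← nl, Category.assoc, kY2, comm]
  have hkX : IsCart p kX := by
    refine IsCart.cancel ?_ hg
    rw [key]
    exact hm.comp (IsCart.of_iso p kY)
  have : IsIso (p.map kX) := by rw [kX1]; infer_instance
  have : IsIso kX := hkX.isIso
  have hfin : IsCocart p (lX ≫ kX) := IsCocart.comp hlX (IsCocart.of_iso p kX)
  rwa [kX2] at hfin

theorem eqToHom_cancel {a b c : B} (h : a = b) (r : b ⟶ c) :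
    eqToHom h.symm ≫ eqToHom h ≫ r = r := by
  subst h; simp

/-- A choice of cocartesian lifts. -/
structure Lifts (p : E ⥤ B) where
  y : Comma p (𝟭 B) → E
  φ : ∀ X, X.left ⟶ y X
  h : ∀ X, p.obj (y X) = X.right
  c : ∀ X, IsCocart p (φ X)
  e : ∀ X, p.map (φ X) = X.hom ≫ eqToHom (h X).symm

namespace Lifts

variable {p : E ⥤ B} (L : Lifts p)

theorem existsUnique (X : Comma p (𝟭 B)) (e : E) (l : X.left ⟶ e) (r : X.right ⟶ p.obj e)
    (w : p.map l = X.hom ≫ r) :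
    ∃! t : L.y X ⟶ e, p.map t = eqToHom (L.h X) ≫ r ∧ L.φ X ≫ t = l := by
  apply L.c X
  rw [L.e, w]
  simp

/-- Morphisms to `iota p`, constructed from components. -/
def mkHom {X : Comma p (𝟭 B)} {e : E} (l : X.left ⟶ e) (r : X.right ⟶ p.obj e)
    (w : p.map l = X.hom ≫ r) : X ⟶ (iota p).obj e :=
  { left := l, right := r, w := (Category.comp_id _).trans w }

theorem hom_w {X : Comma p (𝟭 B)} {e : E} (m : X ⟶ (iota p).obj e) :
    p.map (Y := e) m.left = X.hom ≫ m.right :=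
  (Category.comp_id _).symm.trans m.w

theorem φ_w (X : Comma p (𝟭 B)) (e : E) (f : L.y X ⟶ e) :
    p.map (L.φ X ≫ f) = X.hom ≫ (eqToHom (L.h X).symm ≫ p.map f) := by
  rw [p.map_comp, L.e, Category.assoc]

/-- The hom-set bijection. -/
noncomputable def homEquiv (X : Comma p (𝟭 B)) (e : E) :
    (L.y X ⟶ e) ≃ (X ⟶ (iota p).obj e) where
  toFun f := mkHom (L.φ X ≫ f) (eqToHom (L.h X).symm ≫ p.map f) (L.φ_w X e f)
  invFun m := (L.existsUnique X e m.left m.right (hom_w m)).choose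
  left_inv f := by
    have h := (L.existsUnique X e _ _ (L.φ_w X e f)).choose_spec.1
    refine IsCocart.hom_ext (L.c X) (Eq.trans h.1 ?_) h.2
    rw [eqToHom_trans_assoc, eqToHom_refl, Category.id_comp]
  right_inv m := by
    have h := (L.existsUnique X e m.left m.right (hom_w m)).choose_spec.1
    apply CommaMorphism.ext
    · exact h.2
    · refine (congrArg (fun t => eqToHom (L.h X).symm ≫ t) h.1).trans ?_
      exact eqToHom_cancel (L.h X) m.right

theorem homEquiv_nat (X : Comma p (𝟭 B)) (e e' : E) (g : e ⟶ e') (f : L.y X ⟶ e) :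
    L.homEquiv X e' (f ≫ g) = L.homEquiv X e f ≫ (iota p).map g := by
  apply CommaMorphism.ext
  · exact (Category.assoc _ _ _).symm
  · change eqToHom (L.h X).symm ≫ p.map (f ≫ g) = (eqToHom (L.h X).symm ≫ p.map f) ≫ p.map g
    rw [p.map_comp, Category.assoc]

/-- The left adjoint. -/
noncomputable def tau : Comma p (𝟭 B) ⥤ E :=
  Adjunction.leftAdjointOfEquiv (G := iota p) (F_obj := L.y) L.homEquiv L.homEquiv_nat

/-- The adjunction. -/
noncomputable def adj : L.tau ⊣ iota p :=
  Adjunction.adjunctionOfEquivLeft L.homEquiv L.homEquiv_nat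

/-- The action of `tau` on morphisms. -/
noncomputable def mp {X Y : Comma p (𝟭 B)} (m : X ⟶ Y) : L.y X ⟶ L.y Y := L.tau.map m

theorem unit_app (X : Comma p (𝟭 B)) :
    L.adj.unit.app X = L.homEquiv X (L.y X) (𝟙 _) := by
  rfl

theorem unit_left (X : Comma p (𝟭 B)) : (L.adj.unit.app X).left = L.φ X := by
  rw [unit_app]; exact Category.comp_id _

theorem unit_right (X : Comma p (𝟭 B)) :
    (L.adj.unit.app X).right = eqToHom (L.h X).symm := by
  rw [unit_app]
  change eqToHom _ ≫ p.map (𝟙 _) = _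
  rw [p.map_id]; exact Category.comp_id _

theorem φ_map {X Y : Comma p (𝟭 B)} (m : X ⟶ Y) :
    L.φ X ≫ L.mp m = m.left ≫ L.φ Y := by
  have := congrArg CommaMorphism.left (L.adj.unit.naturality m)
  change m.left ≫ (L.adj.unit.app Y).left = (L.adj.unit.app X).left ≫ L.mp m at this
  rw [unit_left, unit_left] at this
  exact this.symm

theorem p_map {X Y : Comma p (𝟭 B)} (m : X ⟶ Y) :
    p.map (L.mp m) = eqToHom (L.h X) ≫ m.right ≫ eqToHom (L.h Y).symm := by
  have := congrArg CommaMorphism.right (L.adj.unit.naturality m)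
  change m.right ≫ (L.adj.unit.app Y).right =
    (L.adj.unit.app X).right ≫ p.map (L.mp m) at this
  rw [unit_right, unit_right] at this
  have h2 : m.right ≫ eqToHom (L.h Y).symm = eqToHom (L.h X).symm ≫ p.map (L.mp m) := this
  rw [h2, eqToHom_trans_assoc, eqToHom_refl, Category.id_comp]

theorem unit_right_iso (X : Comma p (𝟭 B)) : IsIso (L.adj.unit.app X).right := by
  rw [unit_right]
  exact inferInstanceAs (IsIso (eqToHom (L.h X).symm))

theorem counit_iso (e : E) : IsIso (p.map (L.adj.counit.app e)) := by
  have h1 := congrArg CommaMorphism.right (L.adj.right_triangle_components e)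
  change (L.adj.unit.app ((iota p).obj e)).right ≫ p.map (L.adj.counit.app e) =
    𝟙 (p.obj e) at h1
  have i1 := L.unit_right_iso ((iota p).obj e)
  exact @IsIso.of_isIso_fac_left _ _ _ _ _ _ _ _ i1 (IsIso.id (p.obj e)) h1

theorem tau_cart (hcart : IsCartFib p) [HasPullbacks B] (bcc : BCC p)
    {X Y : Comma p (𝟭 B)} (m : X ⟶ Y) (hm : IsCart (Comma.snd p (𝟭 B)) m) :
    IsCart p (L.mp m) := by
  obtain ⟨pb, hl⟩ := of_isCart_snd hcart m hm
  obtain ⟨e', g, h, hg, hg'⟩ := hcart (L.y Y) (p.obj (L.y X)) (p.map (L.mp m))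
  obtain ⟨f', ⟨f1, f2⟩, -⟩ := hg (m.left ≫ L.φ Y)
    (p.map (L.φ X) ≫ eqToHom h.symm) (by
      rw [hg', ← φ_map]; simp)
  have pb' : IsPullback (p.map f') (p.map m.left) (p.map g) (p.map (L.φ Y)) := by
    rw [f1, hg', L.p_map, L.e, L.e]
    exact pb.of_iso (Iso.refl _) (eqToIso ((L.h X).symm.trans h.symm)) (Iso.refl _)
      (eqToIso (L.h Y).symm) (by simp) (by simp) (by simp) (by simp)
  have hf : IsCocart p f' := bcc f' m.left g (L.φ Y) f2 pb' (L.c Y) hg hl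
  have hX : IsCocart p (L.φ X) := L.c X
  obtain ⟨k, ⟨k1, k2⟩, -⟩ := hX f' (eqToHom h.symm) f1
  obtain ⟨k', ⟨k1', k2'⟩, -⟩ := hf (L.φ X) (eqToHom h) (by simp [f1])
  have : IsIso k := ⟨k', hX.hom_ext (by simp [k1, k1']) (by simp [reassoc_of% k2, k2']),
    hf.hom_ext (by simp [k1, k1']) (by simp [reassoc_of% k2', k2])⟩
  have hk : k ≫ g = L.mp m := by
    refine hX.hom_ext ?_ ?_
    · rw [p.map_comp, k1, hg']; simp
    · rw [← Category.assoc, k2, f2, L.φ_map m]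
  have hfin : IsCart p (k ≫ g) := IsCart.comp (IsCart.of_iso p k) hg
  rwa [hk] at hfin

end Lifts

/-- For a bifibration `p` over a base with pullbacks, `p` satisfies the
Beck–Chevalley condition iff the functor `ι : E ⥤ (p ↓ B)` admits a fibered left
adjoint `τ` over `B` (with `p ∘ τ = ∂₁` and vertical unit and counit, given on objects
by cocartesian transport, i.e. the unit components are cocartesian) which moreover is a
cartesian functor over `B`. -/
theorem stmt_9 (p : E ⥤ B) [HasPullbacks B]
    (hcart : IsCartFib p) (hcocart : IsCocartFib p) :
    (IsCartFib (Comma.snd p (𝟭 B)) ∧ IsCocartFib (Comma.snd p (𝟭 B))) ∧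
    (BCC p ↔
      ∃ (τ : Comma p (𝟭 B) ⥤ E) (adj : τ ⊣ iota p),
        τ ⋙ p = Comma.snd p (𝟭 B) ∧
        (∀ X : Comma p (𝟭 B), IsIso ((adj.unit.app X).right)) ∧
        (∀ e : E, IsIso (p.map (adj.counit.app e))) ∧
        (∀ X : Comma p (𝟭 B), IsCocart p ((adj.unit.app X).left)) ∧
        (∀ {X Y : Comma p (𝟭 B)} (φ : X ⟶ Y),
          IsCart (Comma.snd p (𝟭 B)) φ → IsCart p (τ.map φ))) := by
  refine ⟨⟨isCartFib_snd p hcart, isCocartFib_snd p⟩, ?_, ?_⟩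
  · intro bcc
    choose y φ h c e using fun X : Comma p (𝟭 B) => hcocart X.left X.right X.hom
    let L : Lifts p := ⟨y, φ, h, c, e⟩
    refine ⟨L.tau, L.adj, ?_, ?_, L.counit_iso, ?_, ?_⟩
    · exact CategoryTheory.Functor.ext L.h (fun X Y m => L.p_map m)
    · exact L.unit_right_iso
    · intro X
      rw [L.unit_left]
      exact L.c X
    · intro X Y m hm
      exact L.tau_cart hcart bcc m hm
  · rintro ⟨τ, adj, -, hr, -, hl, hc⟩
    exact bcc_of_adj p τ adj hr hl hc

end MoensPaper
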